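/- Let u satisfy the a priori estimate assumption on Ω̂ ⊂ ℝ^{n+1} × [0,∞), and set v := √(1+|Du|²). Then at every point (x,t) ∈ Ω̂ with u(x,t) ≤ −1 one has v(x,t) ≤ sup { v(y,0)·u(y,0)² : y with (y,0) ∈ Ω̂ and u(y,0) < 0 }. -/

import Mathlib

open Set Filter Topology Metric

noncomputable section

/-- Divergence of a vector field on Euclidean space. -/
def vecDiv {m : ℕ} (X : EuclideanSpace ℝ (Fin m) → EuclideanSpace ℝ (Fin m))
    (x : EuclideanSpace ℝ (Fin m)) : ℝ :=
  ∑ i, fderiv ℝ X x (EuclideanSpace.single i 1) i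

/-- Spatial gradient of a time-dependent function. -/
def spatialGrad {m : ℕ} (u : EuclideanSpace ℝ (Fin m) × ℝ → ℝ)
    (x : EuclideanSpace ℝ (Fin m)) (t : ℝ) : EuclideanSpace ℝ (Fin m) :=
  gradient (fun y => u (y, t)) x

/-- The gradient function `v = √(1+|Du|²)` of the graph of `u(·,t)`. -/
def gradFn {m : ℕ} (u : EuclideanSpace ℝ (Fin m) × ℝ → ℝ)
    (x : EuclideanSpace ℝ (Fin m)) (t : ℝ) : ℝ :=
  Real.sqrt (1 + ‖spatialGrad u x t‖ ^ 2)

/-- Graphical mean curvature flow equation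
`∂u/∂t = √(1+|Du|²) · div(Du/√(1+|Du|²))` at the point `(x,t)`. -/
def mcfEqAt {m : ℕ} (u : EuclideanSpace ℝ (Fin m) × ℝ → ℝ)
    (x : EuclideanSpace ℝ (Fin m)) (t : ℝ) : Prop :=
  deriv (fun s => u (x, s)) t
    = gradFn u x t * vecDiv (fun y => (gradFn u y t)⁻¹ • spatialGrad u y t) x

/-!
The function `F = (v u²)² = (1 + |Du|²) u⁴` is a subsolution at its spatial maxima. With `P = Du`,
`s = 1 + |P|²` and `g⁻¹ = I - P ⊗ P / s`, criticality of `F` makes `P` an eigenvector of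
the Hessian, `D²u P = -(2 s / u) P`. The `g⁻¹`-trace of the inequality `D²F ≤ 0`, combined with
the spatial derivative of the flow equation `∂u/∂t = tr (g⁻¹ D²u)`, then yields `∂F/∂t ≤ 0`; the
good term `tr (g⁻¹ (D²u)²)` is bounded below through `g⁻¹ - s⁻² P ⊗ P = (I - s⁻¹ P ⊗ P)² ≥ 0`.
Hence `F - ε t` has no interior maximum over the past. Since `Du` stays bounded and `u → 0` at
the relative boundary, `F → 0` there, so on `{u < 0}` the maximum of `F` over a bounded time
interval is attained initially.
-/

section Calculus

theorem second_deriv_nonpos_of_isLocalMax {f f' : ℝ → ℝ} {a c : ℝ} (hmax : IsLocalMax f a)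
    (hf : ∀ᶠ s in 𝓝 a, HasDerivAt f (f' s) s) (hf' : HasDerivAt f' c a) : c ≤ 0 := by
  by_contra! hc
  have hderiv : deriv f =ᶠ[𝓝 a] f' := hf.mono fun s hs => hs.deriv
  have hc' : deriv (deriv f) a = c := hderiv.deriv_eq.trans hf'.deriv
  have hmin : IsLocalMin f a := isLocalMin_of_deriv_deriv_pos (hc'.symm ▸ hc)
    hmax.deriv_eq_zero hf.self_of_nhds.continuousAt
  have hconst : f =ᶠ[𝓝 a] fun _ => f a := by
    filter_upwards [hmax, hmin] with s hle hge using le_antisymm hle hge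
  have hzero : deriv (deriv f) a = 0 := by simpa using hconst.deriv.deriv_eq
  exact hc.ne' (hc'.symm.trans hzero)

variable {V F : Type*} [NormedAddCommGroup V] [NormedSpace ℝ V]
  [NormedAddCommGroup F] [NormedSpace ℝ F]

theorem tendsto_add_smul_nhds_zero (q η : V) :
    Tendsto (fun s : ℝ => q + s • η) (𝓝 0) (𝓝 q) :=
  Continuous.tendsto' (by fun_prop) _ _ (by simp)

theorem hasDerivAt_comp_add_smul {f : V → F} {f' : V →L[ℝ] F} {q η : V} {σ : ℝ}
    (hf : HasFDerivAt f f' (q + σ • η)) : HasDerivAt (fun σ : ℝ => f (q + σ • η)) (f' η) σ :=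
  hf.comp_hasDerivAt σ (by simpa using ((hasDerivAt_id σ).smul_const η).const_add q)

theorem hasDerivAt_comp_add_smul_zero {f : V → F} {f' : V →L[ℝ] F} {q : V}
    (hf : HasFDerivAt f f' q) (η : V) : HasDerivAt (fun σ : ℝ => f (q + σ • η)) (f' η) 0 :=
  hasDerivAt_comp_add_smul (by simpa using hf)

theorem hasDerivAt_const_clm_comp {E : Type*} [NormedAddCommGroup E] [NormedSpace ℝ E]
    (L : V →L[ℝ] F) {M : ℝ → E →L[ℝ] V} {M' : E →L[ℝ] V} {σ : ℝ} (hM : HasDerivAt M M' σ) :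
    HasDerivAt (fun σ => L ∘L M σ) (L ∘L M') σ := by
  simpa using (hasDerivAt_const σ L).clm_comp hM

theorem fderiv_fderiv_fderiv_symm {f : V → F} {x : V} (hf : ContDiffAt ℝ 3 f x) (a b c : V) :
    fderiv ℝ (fderiv ℝ (fderiv ℝ f)) x a b c = fderiv ℝ (fderiv ℝ (fderiv ℝ f)) x c a b := by
  have hf₁ : ContDiffAt ℝ 2 (fderiv ℝ f) x := hf.fderiv_right (by norm_num)
  have hf₂ : DifferentiableAt ℝ (fderiv ℝ (fderiv ℝ f)) x :=
    (hf₁.fderiv_right (m := 1) (by norm_num)).differentiableAt (by norm_num)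
  have hderiv (b c : V) := (hf₂.hasFDerivAt.clm_apply
    (hasFDerivAt_const b x)).clm_apply (hasFDerivAt_const c x)
  have hswap : (fun y => fderiv ℝ (fderiv ℝ f) y b c) =ᶠ[𝓝 x]
      fun y => fderiv ℝ (fderiv ℝ f) y c b := by
    filter_upwards [hf.eventually (by simp)] with y hy
    exact (hy.of_le (m := 2) (by norm_num)).isSymmSndFDerivAt (by simp) b c
  have hlast := DFunLike.congr_fun
    ((hderiv b c).unique ((hderiv c b).congr_of_eventuallyEq hswap)) a
  calc fderiv ℝ (fderiv ℝ (fderiv ℝ f)) x a b c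
      = fderiv ℝ (fderiv ℝ (fderiv ℝ f)) x a c b := by simpa using hlast
    _ = fderiv ℝ (fderiv ℝ (fderiv ℝ f)) x c a b := by rw [hf₁.isSymmSndFDerivAt (by simp) a c]

end Calculus

section InnerProduct
open scoped RealInnerProductSpace

variable {E : Type*} [NormedAddCommGroup E] [InnerProductSpace ℝ E]

theorem hasDerivAt_one_add_norm_sq_mul_pow_four {P : ℝ → E} {w : ℝ → ℝ} {P' : E} {w' σ : ℝ}
    (hP : HasDerivAt P P' σ) (hw : HasDerivAt w w' σ) :
    HasDerivAt (fun σ => (1 + ‖P σ‖ ^ 2) * w σ ^ 4)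
      (2 * w σ ^ 4 * ⟪P σ, P'⟫ + 4 * (1 + ‖P σ‖ ^ 2) * w σ ^ 3 * w') σ := by
  refine ((hP.norm_sq.const_add 1).mul (hw.pow 4)).congr_deriv ?_
  simp only [Pi.pow_apply, Nat.cast_ofNat, Nat.add_one_sub_one]
  ring

theorem hasDerivAt_deriv_one_add_norm_sq_mul_pow_four {P P' : ℝ → E} {w w' : ℝ → ℝ} {P'' : E}
    {w'' σ : ℝ} (hP : HasDerivAt P (P' σ) σ) (hw : HasDerivAt w (w' σ) σ)
    (hP' : HasDerivAt P' P'' σ) (hw' : HasDerivAt w' w'' σ) :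
    HasDerivAt
      (fun σ => 2 * w σ ^ 4 * ⟪P σ, P' σ⟫ + 4 * (1 + ‖P σ‖ ^ 2) * w σ ^ 3 * w' σ)
      (2 * w σ ^ 4 * (‖P' σ‖ ^ 2 + ⟪P σ, P''⟫) + 16 * w σ ^ 3 * ⟪P σ, P' σ⟫ * w' σ
        + 12 * (1 + ‖P σ‖ ^ 2) * w σ ^ 2 * w' σ ^ 2 + 4 * (1 + ‖P σ‖ ^ 2) * w σ ^ 3 * w'') σ := by
  refine ((((hw.pow 4).const_mul 2).mul (hP.inner ℝ hP')).add
    ((((hP.norm_sq.const_add 1).const_mul 4).mul (hw.pow 3)).mul hw')).congr_deriv ?_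
  simp only [Nat.cast_ofNat, Nat.add_one_sub_one, Pi.pow_apply, Pi.mul_apply,
    real_inner_self_eq_norm_sq]
  ring

variable {ι : Type*} [Fintype ι]

/-- The trace of a bilinear form `M` with respect to the inverse metric
`g⁻¹ = I - P ⊗ P / (1 + |P|²)` of a graph whose gradient is `P`. -/
def graphTrace (b : OrthonormalBasis ι ℝ E) (P : E) : (E →L[ℝ] E →L[ℝ] ℝ) →ₗ[ℝ] ℝ where
  toFun M := ∑ i, M (b i) (b i) - (1 + ‖P‖ ^ 2)⁻¹ * M P P
  map_add' M N := by simp [Finset.sum_add_distrib]; ring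
  map_smul' c M := by simp [← Finset.mul_sum]; ring

theorem graphTrace_apply (b : OrthonormalBasis ι ℝ E) (P : E) (M : E →L[ℝ] E →L[ℝ] ℝ) :
    graphTrace b P M = ∑ i, M (b i) (b i) - (1 + ‖P‖ ^ 2)⁻¹ * M P P := rfl

theorem sum_inner_basis_smul_apply (b : OrthonormalBasis ι ℝ E) (L : E →L[ℝ] ℝ) (x : E) :
    ∑ i, ⟪b i, x⟫ * L (b i) = L x := by
  conv_rhs => rw [← b.sum_repr' x]
  simp

theorem graphTrace_rankOne (b : OrthonormalBasis ι ℝ E) (P : E) :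
    graphTrace b P ((innerSL ℝ P).smulRight (innerSL ℝ P)) = ‖P‖ ^ 2 / (1 + ‖P‖ ^ 2) := by
  have hsum : ∑ i, ⟪P, b i⟫ * ⟪P, b i⟫ = ‖P‖ ^ 2 := by
    simpa [real_inner_comm] using b.sum_inner_mul_inner P P
  simp only [graphTrace_apply, ContinuousLinearMap.smulRight_apply, coe_innerSL_apply, smul_apply,
    smul_eq_mul, hsum, real_inner_self_eq_norm_sq]
  field_simp
  ring

-- `g⁻¹ - s⁻² P ⊗ P` is the square of `I - s⁻¹ P ⊗ P`, where `s = 1 + |P|²`.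
theorem graphTrace_eq_sum_add (b : OrthonormalBasis ι ℝ E) (P : E) (M : E →L[ℝ] E →L[ℝ] ℝ) :
    graphTrace b P M =
      ∑ i, M (b i - ((1 + ‖P‖ ^ 2)⁻¹ * ⟪b i, P⟫) • P) (b i - ((1 + ‖P‖ ^ 2)⁻¹ * ⟪b i, P⟫) • P)
        + ((1 + ‖P‖ ^ 2)⁻¹) ^ 2 * M P P := by
  set c := (1 + ‖P‖ ^ 2)⁻¹ with hc
  have hleft : ∑ i, ⟪b i, P⟫ * M (b i) P = M P P := sum_inner_basis_smul_apply b (M.flip P) P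
  have hright : ∑ i, ⟪b i, P⟫ * M P (b i) = M P P := sum_inner_basis_smul_apply b (M P) P
  have hsq : ∑ i, ⟪b i, P⟫ ^ 2 = ‖P‖ ^ 2 := by
    simpa [real_inner_comm, sq] using b.sum_inner_mul_inner P P
  have hexpand (i : ι) : M (b i - (c * ⟪b i, P⟫) • P) (b i - (c * ⟪b i, P⟫) • P) =
      M (b i) (b i) - c * (⟪b i, P⟫ * M (b i) P) - c * (⟪b i, P⟫ * M P (b i))
        + c ^ 2 * M P P * ⟪b i, P⟫ ^ 2 := by
    simp only [map_sub, map_smul, sub_apply, smul_eq_mul, smul_apply]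
    ring
  have hcs : c * (1 + ‖P‖ ^ 2) = 1 := inv_mul_cancel₀ (by positivity)
  simp only [hexpand, Finset.sum_add_distrib, Finset.sum_sub_distrib, ← Finset.mul_sum, hleft,
    hright, hsq, graphTrace_apply, ← hc]
  linear_combination -(c * M P P) * hcs

theorem le_graphTrace_of_nonneg (b : OrthonormalBasis ι ℝ E) (P : E) {M : E →L[ℝ] E →L[ℝ] ℝ}
    (hM : ∀ ξ, 0 ≤ M ξ ξ) : ((1 + ‖P‖ ^ 2)⁻¹) ^ 2 * M P P ≤ graphTrace b P M := by
  rw [graphTrace_eq_sum_add]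
  exact le_add_of_nonneg_left (Finset.sum_nonneg fun i _ => hM _)

theorem graphTrace_nonneg (b : OrthonormalBasis ι ℝ E) (P : E) {M : E →L[ℝ] E →L[ℝ] ℝ}
    (hM : ∀ ξ, 0 ≤ M ξ ξ) : 0 ≤ graphTrace b P M :=
  (mul_nonneg (sq_nonneg _) (hM P)).trans (le_graphTrace_of_nonneg b P hM)

theorem hasDerivAt_graphTrace (b : OrthonormalBasis ι ℝ E) {P : ℝ → E} {P' : E}
    {M : ℝ → E →L[ℝ] E →L[ℝ] ℝ} {M' : E →L[ℝ] E →L[ℝ] ℝ} {σ : ℝ}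
    (hP : HasDerivAt P P' σ) (hM : HasDerivAt M M' σ) :
    HasDerivAt (fun σ => graphTrace b (P σ) (M σ))
      (graphTrace b (P σ) M' + 2 * ((1 + ‖P σ‖ ^ 2)⁻¹) ^ 2 * ⟪P σ, P'⟫ * M σ (P σ) (P σ)
        - (1 + ‖P σ‖ ^ 2)⁻¹ * (M σ P' (P σ) + M σ (P σ) P')) σ := by
  have hsum : HasDerivAt (fun σ => ∑ i, M σ (b i) (b i)) (∑ i, M' (b i) (b i)) σ :=
    HasDerivAt.fun_sum fun i _ => by
      simpa using (hM.clm_apply (hasDerivAt_const σ (b i))).clm_apply (hasDerivAt_const σ (b i))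
  have hinv : HasDerivAt (fun σ => (1 + ‖P σ‖ ^ 2)⁻¹) _ σ :=
    (hP.norm_sq.const_add 1).fun_inv (by positivity)
  have hquad := (hM.clm_apply hP).clm_apply hP
  refine (hsum.sub (hinv.mul hquad)).congr_deriv ?_
  simp only [add_apply, graphTrace_apply, inv_pow]
  ring

theorem graphTrace_le_of_hessian_nonpos (b : OrthonormalBasis ι ℝ E) {P : E} {w : ℝ}
    {B : E →L[ℝ] E} {T : E →L[ℝ] E →L[ℝ] ℝ} (hw : w ≠ 0) (hB : B.toLinearMap.IsSymmetric)
    (heig : B P = (-2 * (1 + ‖P‖ ^ 2) / w) • P)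
    (hhess : ∀ ξ, 2 * w ^ 4 * (‖B ξ‖ ^ 2 + T ξ ξ) + 16 * w ^ 3 * ⟪P, B ξ⟫ * ⟪P, ξ⟫
      + 12 * (1 + ‖P‖ ^ 2) * w ^ 2 * ⟪P, ξ⟫ ^ 2 + 4 * (1 + ‖P‖ ^ 2) * w ^ 3 * ⟪B ξ, ξ⟫ ≤ 0) :
    w ^ 2 * graphTrace b P T + 2 * (1 + ‖P‖ ^ 2) * w * graphTrace b P (innerSL ℝ ∘L B)
      ≤ 6 * ‖P‖ ^ 2 := by
  set s := 1 + ‖P‖ ^ 2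
  have hs0 : 0 < s := by positivity
  have hPB (ξ : E) : w * ⟪P, B ξ⟫ = -2 * s * ⟪P, ξ⟫ := by
    rw [show ⟪P, B ξ⟫ = ⟪B P, ξ⟫ from (hB P ξ).symm, heig, real_inner_smul_left]
    field_simp
  set Q : E →L[ℝ] E →L[ℝ] ℝ := (innerSL ℝ).bilinearComp B B
  set R : E →L[ℝ] E →L[ℝ] ℝ := (innerSL ℝ P).smulRight (innerSL ℝ P)
  set S : E →L[ℝ] E →L[ℝ] ℝ := innerSL ℝ ∘L B
  have htrace : 0 ≤ graphTrace b P ((10 * s) • R + (-w ^ 2) • (Q + T) + (-(2 * s * w)) • S) := by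
    refine graphTrace_nonneg b P fun ξ => ?_
    have hξ : 0 ≤ 2 * w ^ 2 * (10 * s * (⟪P, ξ⟫ * ⟪P, ξ⟫) + -w ^ 2 * (⟪B ξ, B ξ⟫ + T ξ ξ)
        + -(2 * s * w) * ⟪B ξ, ξ⟫) := by
      rw [real_inner_self_eq_norm_sq]
      linear_combination hhess ξ - 16 * w ^ 2 * ⟪P, ξ⟫ * hPB ξ
    exact nonneg_of_mul_nonneg_right hξ (by positivity)
  have hQ : 4 * ‖P‖ ^ 2 ≤ w ^ 2 * graphTrace b P Q := by
    have hle := le_graphTrace_of_nonneg b P (M := Q) fun ξ => by simp [Q]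
    calc 4 * ‖P‖ ^ 2 = w ^ 2 * ((s⁻¹) ^ 2 * Q P P) := by
          simp only [inv_pow, ContinuousLinearMap.bilinearComp_apply, heig, map_smul, smul_apply,
            coe_innerSL_apply, real_inner_self_eq_norm_sq, smul_eq_mul, Q]
          field_simp
          ring
      _ ≤ w ^ 2 * graphTrace b P Q := by gcongr
  have hR : s * graphTrace b P R = ‖P‖ ^ 2 := by
    rw [graphTrace_rankOne, mul_div_cancel₀ _ hs0.ne']
  simp only [map_add, map_smul, smul_eq_mul] at htrace
  linarith

theorem eigenvector_of_critical {P : E} {w : ℝ} {B : E →L[ℝ] E} (hw : w ≠ 0)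
    (hB : B.toLinearMap.IsSymmetric)
    (hcrit : ∀ ξ, 2 * w ^ 4 * ⟪P, B ξ⟫ + 4 * (1 + ‖P‖ ^ 2) * w ^ 3 * ⟪P, ξ⟫ = 0) :
    B P = (-2 * (1 + ‖P‖ ^ 2) / w) • P := by
  refine ext_inner_right ℝ fun ξ => ?_
  have hξ : 2 * w ^ 3 * (w * ⟪P, B ξ⟫ + 2 * (1 + ‖P‖ ^ 2) * ⟪P, ξ⟫) = 0 := by
    linear_combination hcrit ξ
  have hzero := (mul_eq_zero.1 hξ).resolve_left (by positivity)
  rw [real_inner_smul_left, show ⟪B P, ξ⟫ = ⟪P, B ξ⟫ from hB P ξ]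
  field_simp
  linarith

theorem evolution_nonpos_of_eigenvector (b : OrthonormalBasis ι ℝ E) {P : E} {w : ℝ}
    {B : E →L[ℝ] E} {T : E →L[ℝ] E →L[ℝ] ℝ} (hw : w ≠ 0) (hB : B.toLinearMap.IsSymmetric)
    (heig : B P = (-2 * (1 + ‖P‖ ^ 2) / w) • P)
    (hhess : ∀ ξ, 2 * w ^ 4 * (‖B ξ‖ ^ 2 + T ξ ξ) + 16 * w ^ 3 * ⟪P, B ξ⟫ * ⟪P, ξ⟫
      + 12 * (1 + ‖P‖ ^ 2) * w ^ 2 * ⟪P, ξ⟫ ^ 2 + 4 * (1 + ‖P‖ ^ 2) * w ^ 3 * ⟪B ξ, ξ⟫ ≤ 0) :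
    2 * w ^ 4 * (graphTrace b P T + 2 * ((1 + ‖P‖ ^ 2)⁻¹) ^ 2 * ⟪P, B P⟫ * ⟪B P, P⟫
        - (1 + ‖P‖ ^ 2)⁻¹ * (2 * ‖B P‖ ^ 2))
      + 4 * (1 + ‖P‖ ^ 2) * w ^ 3 * graphTrace b P (innerSL ℝ ∘L B) ≤ 0 := by
  have hle := graphTrace_le_of_hessian_nonpos b hw hB heig hhess
  have hreaction : w ^ 2 * (2 * ((1 + ‖P‖ ^ 2)⁻¹) ^ 2 * ⟪P, B P⟫ * ⟪B P, P⟫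
      - (1 + ‖P‖ ^ 2)⁻¹ * (2 * ‖B P‖ ^ 2)) = -8 * ‖P‖ ^ 2 := by
    have hs : 1 + ‖P‖ ^ 2 ≠ 0 := by positivity
    simp only [heig, real_inner_smul_left, real_inner_smul_right, real_inner_self_eq_norm_sq,
      norm_smul, mul_pow, Real.norm_eq_abs, sq_abs]
    field_simp
    ring
  have hP := mul_nonneg (sq_nonneg w) (sq_nonneg ‖P‖)
  linear_combination 2 * w ^ 2 * hle + 2 * w ^ 2 * hreaction + 4 * hP

end InnerProduct

section Spacetime
open scoped RealInnerProductSpace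

variable {V E : Type*} [NormedAddCommGroup V] [NormedSpace ℝ V]
  [NormedAddCommGroup E] [InnerProductSpace ℝ E]

/-- The restriction of a bilinear form on space-time `V` to the spatial directions, space being
embedded by `J`. -/
def spatialForm (J : E →L[ℝ] V) (M : V →L[ℝ] V →L[ℝ] ℝ) : E →L[ℝ] E →L[ℝ] ℝ :=
  ContinuousLinearMap.precomp ℝ J ∘L M ∘L J

theorem spatialForm_apply (J : E →L[ℝ] V) (M : V →L[ℝ] V →L[ℝ] ℝ) (ξ η : E) :
    spatialForm J M ξ η = M (J ξ) (J η) := rfl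

theorem hasDerivAt_spatialForm (J : E →L[ℝ] V) {M : ℝ → V →L[ℝ] V →L[ℝ] ℝ}
    {M' : V →L[ℝ] V →L[ℝ] ℝ} {σ : ℝ} (hM : HasDerivAt M M' σ) :
    HasDerivAt (fun σ => spatialForm J (M σ)) (spatialForm J M') σ := by
  have hcomp : HasDerivAt (fun σ => M σ ∘L J) (M' ∘L J) σ := by
    simpa using hM.clm_comp (hasDerivAt_const σ J)
  exact hasDerivAt_const_clm_comp _ hcomp

variable [CompleteSpace E]

/-- The restriction of a covector on space-time `V` to the spatial directions, as a vector, space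
being embedded by `J`. The spatial gradient of `u` is `spatialPart J (fderiv ℝ u q)`. -/
def spatialPart (J : E →L[ℝ] V) : (V →L[ℝ] ℝ) →L[ℝ] E :=
  (InnerProductSpace.toDual ℝ E).symm.toContinuousLinearEquiv.toContinuousLinearMap ∘L
    ContinuousLinearMap.precomp ℝ J

theorem inner_spatialPart (J : E →L[ℝ] V) (L : V →L[ℝ] ℝ) (ξ : E) :
    ⟪spatialPart J L, ξ⟫ = L (J ξ) := by
  simp [spatialPart]

/-- The spatial Hessian `D²u` at a point of space-time, as an operator on space. -/
def spatialHess (J : E →L[ℝ] V) (u : V → ℝ) (q : V) : E →L[ℝ] E :=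
  spatialPart J ∘L fderiv ℝ (fderiv ℝ u) q ∘L J

theorem spatialHess_apply (J : E →L[ℝ] V) (u : V → ℝ) (q : V) (ξ : E) :
    spatialHess J u q ξ = spatialPart J (fderiv ℝ (fderiv ℝ u) q (J ξ)) := rfl

theorem inner_spatialHess (J : E →L[ℝ] V) (u : V → ℝ) (q : V) (ξ η : E) :
    ⟪spatialHess J u q ξ, η⟫ = fderiv ℝ (fderiv ℝ u) q (J ξ) (J η) :=
  inner_spatialPart J _ η

theorem isSymmetric_spatialHess (J : E →L[ℝ] V) {u : V → ℝ} {q : V} (hu : ContDiffAt ℝ 2 u q) :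
    (spatialHess J u q).toLinearMap.IsSymmetric := fun ξ η => by
  rw [ContinuousLinearMap.coe_coe, inner_spatialHess, real_inner_comm, inner_spatialHess,
    hu.isSymmSndFDerivAt (by simp)]

theorem innerSL_comp_spatialHess (J : E →L[ℝ] V) (u : V → ℝ) (q : V) :
    innerSL ℝ ∘L spatialHess J u q = spatialForm J (fderiv ℝ (fderiv ℝ u) q) := by
  ext ξ η
  exact inner_spatialHess J u q ξ η

/-- The function `(1 + |Du|²) u⁴ = (v u²)²` to which the maximum principle is applied. -/
def gradEnergy (J : E →L[ℝ] V) (u : V → ℝ) (y : V) : ℝ :=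
  (1 + ‖spatialPart J (fderiv ℝ u y)‖ ^ 2) * u y ^ 4

/-- The derivative of `gradEnergy` in the direction `η`. -/
def gradEnergyDeriv (J : E →L[ℝ] V) (u : V → ℝ) (η y : V) : ℝ :=
  2 * u y ^ 4 * ⟪spatialPart J (fderiv ℝ u y), spatialPart J (fderiv ℝ (fderiv ℝ u) y η)⟫
    + 4 * (1 + ‖spatialPart J (fderiv ℝ u y)‖ ^ 2) * u y ^ 3 * fderiv ℝ u y η

theorem hasDerivAt_gradEnergy_line (J : E →L[ℝ] V) {u : V → ℝ} {q η : V} {σ : ℝ}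
    (hu : ContDiffAt ℝ 2 u (q + σ • η)) :
    HasDerivAt (fun σ : ℝ => gradEnergy J u (q + σ • η))
      (gradEnergyDeriv J u η (q + σ • η)) σ := by
  have hu₁ := (hu.fderiv_right (m := 1) (by norm_num)).differentiableAt (by norm_num)
  exact hasDerivAt_one_add_norm_sq_mul_pow_four
    ((spatialPart J).hasFDerivAt.comp_hasDerivAt σ (hasDerivAt_comp_add_smul hu₁.hasFDerivAt))
    (hasDerivAt_comp_add_smul (hu.differentiableAt (by norm_num)).hasFDerivAt)

theorem hasDerivAt_gradEnergyDeriv_line (J : E →L[ℝ] V) {u : V → ℝ} {q : V} (η : V)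
    (hu : ContDiffAt ℝ 3 u q) :
    HasDerivAt (fun σ : ℝ => gradEnergyDeriv J u η (q + σ • η))
      (2 * u q ^ 4 * (‖spatialPart J (fderiv ℝ (fderiv ℝ u) q η)‖ ^ 2
          + ⟪spatialPart J (fderiv ℝ u q),
              spatialPart J (fderiv ℝ (fderiv ℝ (fderiv ℝ u)) q η η)⟫)
        + 16 * u q ^ 3 * ⟪spatialPart J (fderiv ℝ u q),
            spatialPart J (fderiv ℝ (fderiv ℝ u) q η)⟫ * fderiv ℝ u q η
        + 12 * (1 + ‖spatialPart J (fderiv ℝ u q)‖ ^ 2) * u q ^ 2 * fderiv ℝ u q η ^ 2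
        + 4 * (1 + ‖spatialPart J (fderiv ℝ u q)‖ ^ 2) * u q ^ 3
          * fderiv ℝ (fderiv ℝ u) q η η) 0 := by
  have hu₁ : ContDiffAt ℝ 2 (fderiv ℝ u) q := hu.fderiv_right (by norm_num)
  have hu₂ : ContDiffAt ℝ 1 (fderiv ℝ (fderiv ℝ u)) q := hu₁.fderiv_right (by norm_num)
  have hderiv₀ := hasDerivAt_comp_add_smul_zero (hu.differentiableAt (by norm_num)).hasFDerivAt η
  have hderiv₁ := hasDerivAt_comp_add_smul_zero (hu₁.differentiableAt (by norm_num)).hasFDerivAt η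
  have hderiv₂ : HasDerivAt (fun σ : ℝ => fderiv ℝ (fderiv ℝ u) (q + σ • η) η)
      (fderiv ℝ (fderiv ℝ (fderiv ℝ u)) q η η) 0 := by
    simpa using (hasDerivAt_comp_add_smul_zero
      (hu₂.differentiableAt (by norm_num)).hasFDerivAt η).clm_apply (hasDerivAt_const 0 η)
  have hP : HasDerivAt (fun σ : ℝ => spatialPart J (fderiv ℝ u (q + σ • η)))
      (spatialPart J (fderiv ℝ (fderiv ℝ u) q η)) 0 :=
    (spatialPart J).hasFDerivAt.comp_hasDerivAt 0 hderiv₁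
  have hmain := hasDerivAt_deriv_one_add_norm_sq_mul_pow_four
    (P := fun σ => spatialPart J (fderiv ℝ u (q + σ • η)))
    (P' := fun σ => spatialPart J (fderiv ℝ (fderiv ℝ u) (q + σ • η) η))
    (w := fun σ => u (q + σ • η)) (w' := fun σ => fderiv ℝ u (q + σ • η) η)
    (by simpa using hP) (by simpa using hderiv₀)
    ((spatialPart J).hasFDerivAt.comp_hasDerivAt 0 hderiv₂)
    (by simpa using hderiv₁.clm_apply (hasDerivAt_const (0 : ℝ) η))
  simpa only [gradEnergyDeriv, zero_smul, add_zero] using hmain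

theorem spatialHess_apply_grad_of_isLocalMax (J : E →L[ℝ] V) {u : V → ℝ} {q : V}
    (hu : ContDiffAt ℝ 2 u q) (hu₀ : u q ≠ 0)
    (hmax : ∀ ξ, IsLocalMax (fun σ : ℝ => gradEnergy J u (q + σ • J ξ)) 0) :
    spatialHess J u q (spatialPart J (fderiv ℝ u q)) =
      (-2 * (1 + ‖spatialPart J (fderiv ℝ u q)‖ ^ 2) / u q) • spatialPart J (fderiv ℝ u q) := by
  refine eigenvector_of_critical hu₀ (isSymmetric_spatialHess J hu) fun ξ => ?_
  have hzero := (hmax ξ).hasDerivAt_eq_zero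
    (hasDerivAt_gradEnergy_line J (by simpa only [zero_smul, add_zero] using hu))
  simpa only [gradEnergyDeriv, zero_smul, add_zero, spatialHess_apply, inner_spatialPart]
    using hzero

theorem hessian_gradEnergy_nonpos_of_isLocalMax (J : E →L[ℝ] V) {u : V → ℝ} {q : V}
    (hu : ContDiffAt ℝ 3 u q) {ξ : E}
    (hmax : IsLocalMax (fun σ : ℝ => gradEnergy J u (q + σ • J ξ)) 0) :
    2 * u q ^ 4 * (‖spatialHess J u q ξ‖ ^ 2
        + spatialForm J (fderiv ℝ (fderiv ℝ (fderiv ℝ u)) q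
            (J (spatialPart J (fderiv ℝ u q)))) ξ ξ)
      + 16 * u q ^ 3 * ⟪spatialPart J (fderiv ℝ u q), spatialHess J u q ξ⟫
        * ⟪spatialPart J (fderiv ℝ u q), ξ⟫
      + 12 * (1 + ‖spatialPart J (fderiv ℝ u q)‖ ^ 2) * u q ^ 2
        * ⟪spatialPart J (fderiv ℝ u q), ξ⟫ ^ 2
      + 4 * (1 + ‖spatialPart J (fderiv ℝ u q)‖ ^ 2) * u q ^ 3
        * ⟪spatialHess J u q ξ, ξ⟫ ≤ 0 := by
  have hline : ∀ᶠ σ in 𝓝 (0 : ℝ), HasDerivAt (fun σ : ℝ => gradEnergy J u (q + σ • J ξ))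
      (gradEnergyDeriv J u (J ξ) (q + σ • J ξ)) σ := by
    filter_upwards [(tendsto_add_smul_nhds_zero q (J ξ)).eventually (hu.eventually (by simp))]
      with σ hσ using hasDerivAt_gradEnergy_line J (hσ.of_le (m := 2) (by norm_num))
  have hle := second_deriv_nonpos_of_isLocalMax hmax hline
    (hasDerivAt_gradEnergyDeriv_line J (J ξ) hu)
  rw [real_inner_comm (spatialPart J (fderiv ℝ (fderiv ℝ (fderiv ℝ u)) q (J ξ) (J ξ))),
    inner_spatialPart, fderiv_fderiv_fderiv_symm hu] at hle
  simpa only [spatialHess_apply, spatialForm_apply, inner_spatialPart] using hle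

variable {ι : Type*} [Fintype ι]

/-- The non-divergence form `∂u/∂t = gⁱʲ DᵢDⱼu` of graphical mean curvature flow at the point `y`,
where `τ` is the unit time direction. -/
def graphMCFEqAt (b : OrthonormalBasis ι ℝ E) (J : E →L[ℝ] V) (τ : V) (u : V → ℝ) (y : V) : Prop :=
  fderiv ℝ u y τ =
    graphTrace b (spatialPart J (fderiv ℝ u y)) (spatialForm J (fderiv ℝ (fderiv ℝ u) y))

theorem fderiv_fderiv_time_of_graphMCFEqAt (b : OrthonormalBasis ι ℝ E) (J : E →L[ℝ] V) (τ : V)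
    {u : V → ℝ} {q : V} (hu : ContDiffAt ℝ 3 u q)
    (hflow : ∀ᶠ y in 𝓝 q, graphMCFEqAt b J τ u y)
    (ξ : E) :
    fderiv ℝ (fderiv ℝ u) q (J ξ) τ =
      graphTrace b (spatialPart J (fderiv ℝ u q))
          (spatialForm J (fderiv ℝ (fderiv ℝ (fderiv ℝ u)) q (J ξ)))
        + 2 * ((1 + ‖spatialPart J (fderiv ℝ u q)‖ ^ 2)⁻¹) ^ 2
          * ⟪spatialPart J (fderiv ℝ u q), spatialHess J u q ξ⟫
          * ⟪spatialHess J u q (spatialPart J (fderiv ℝ u q)), spatialPart J (fderiv ℝ u q)⟫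
        - (1 + ‖spatialPart J (fderiv ℝ u q)‖ ^ 2)⁻¹
          * (2 * ⟪spatialHess J u q (spatialPart J (fderiv ℝ u q)), spatialHess J u q ξ⟫) := by
  have hu₁ : ContDiffAt ℝ 2 (fderiv ℝ u) q := hu.fderiv_right (by norm_num)
  have hu₂ : ContDiffAt ℝ 1 (fderiv ℝ (fderiv ℝ u)) q := hu₁.fderiv_right (by norm_num)
  have hgrad := hasDerivAt_comp_add_smul_zero
    (hu₁.differentiableAt (by norm_num)).hasFDerivAt (J ξ)
  have hhess := hasDerivAt_spatialForm J (hasDerivAt_comp_add_smul_zero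
    (hu₂.differentiableAt (by norm_num)).hasFDerivAt (J ξ))
  have hright := (hasDerivAt_graphTrace b
    ((spatialPart J).hasFDerivAt.comp_hasDerivAt 0 hgrad)
    hhess).congr_of_eventuallyEq
    ((tendsto_add_smul_nhds_zero q (J ξ)).eventually hflow)
  have hleft : HasDerivAt (fun σ : ℝ => fderiv ℝ u (q + σ • J ξ) τ)
      (fderiv ℝ (fderiv ℝ u) q (J ξ) τ) 0 := by
    simpa using hgrad.clm_apply (hasDerivAt_const 0 τ)
  have hsymm (η : E) : ⟪spatialHess J u q η, spatialPart J (fderiv ℝ u q)⟫ =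
      ⟪spatialHess J u q (spatialPart J (fderiv ℝ u q)), η⟫ := by
    rw [real_inner_comm]
    exact (isSymmetric_spatialHess J (hu.of_le (m := 2) (by norm_num)) _ η).symm
  rw [hleft.unique hright]
  simp only [Function.comp_apply, zero_smul, add_zero, spatialForm_apply, ← inner_spatialHess,
    ← spatialHess_apply]
  rw [hsymm (spatialHess J u q ξ), ← two_mul]

/- At a spatial maximum the space derivatives of the energy pay for its reaction terms, so that the
flow cannot increase it. -/
theorem gradEnergyDeriv_time_nonpos (b : OrthonormalBasis ι ℝ E) (J : E →L[ℝ] V) (τ : V)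
    {u : V → ℝ} {q : V} (hu : ContDiffAt ℝ 3 u q) (hu₀ : u q ≠ 0)
    (hflow : ∀ᶠ y in 𝓝 q, graphMCFEqAt b J τ u y)
    (hmax : ∀ ξ, IsLocalMax (fun σ : ℝ => gradEnergy J u (q + σ • J ξ)) 0) :
    gradEnergyDeriv J u τ q ≤ 0 := by
  have hu' : ContDiffAt ℝ 2 u q := hu.of_le (by norm_num)
  have hle := evolution_nonpos_of_eigenvector b hu₀ (isSymmetric_spatialHess J hu')
    (spatialHess_apply_grad_of_isLocalMax J hu' hu₀ hmax)
    fun ξ => hessian_gradEnergy_nonpos_of_isLocalMax J hu (hmax ξ)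
  rwa [innerSL_comp_spatialHess, ← show _ = _ from hflow.self_of_nhds,
    ← real_inner_self_eq_norm_sq (spatialHess J u q _),
    ← fderiv_fderiv_time_of_graphMCFEqAt b J τ hu hflow, hu'.isSymmSndFDerivAt (by simp),
    ← inner_spatialPart, real_inner_comm] at hle

theorem not_isLocalMaxOn_gradEnergy_sub (b : OrthonormalBasis ι ℝ E) {J : E →L[ℝ] V} {τ : V}
    {ℓ : V →L[ℝ] ℝ} (hJ : ∀ ξ, ℓ (J ξ) = 0) (hτ : ℓ τ = 1) {u : V → ℝ} {q : V}
    (hu : ContDiffAt ℝ 3 u q) (hu₀ : u q ≠ 0)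
    (hflow : ∀ᶠ y in 𝓝 q, graphMCFEqAt b J τ u y)
    {ε : ℝ} (hε : 0 < ε) :
    ¬ IsLocalMaxOn (fun y => gradEnergy J u y - ε * ℓ y) {y | ℓ y ≤ ℓ q} q := by
  intro hmax
  have hmax' := eventually_nhdsWithin_iff.1 hmax
  have hspace (ξ : E) : IsLocalMax (fun σ : ℝ => gradEnergy J u (q + σ • J ξ)) 0 := by
    filter_upwards [(tendsto_add_smul_nhds_zero q (J ξ)).eventually hmax'] with σ hσ
    simpa [hJ] using hσ
  have htime : HasDerivAt (fun σ : ℝ => gradEnergy J u (q + σ • τ) - ε * ℓ (q + σ • τ))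
      (gradEnergyDeriv J u τ q - ε) 0 := by
    have henergy := hasDerivAt_gradEnergy_line J (q := q) (η := τ) (σ := 0)
      (by simpa using hu.of_le (m := 2) (by norm_num))
    have hℓ := (hasDerivAt_comp_add_smul_zero (ℓ.hasFDerivAt (x := q)) τ).const_mul ε
    refine (henergy.fun_sub hℓ).congr_deriv ?_
    simp [hτ]
  have hpast : IsLocalMaxOn (fun σ : ℝ => gradEnergy J u (q + σ • τ) - ε * ℓ (q + σ • τ))
      (Iic 0) 0 := by
    refine eventually_nhdsWithin_iff.2 ?_
    filter_upwards [(tendsto_add_smul_nhds_zero q τ).eventually hmax'] with σ hσ hσ0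
    simpa [hτ] using hσ (by simpa [hτ] using hσ0)
  have hcone : (-1 : ℝ) ∈ posTangentConeAt (Iic 0) 0 :=
    mem_posTangentConeAt_of_segment_subset ((convex_Iic 0).segment_subset (by simp) (by simp))
  have hnonpos := hpast.hasFDerivWithinAt_nonpos htime.hasFDerivAt.hasFDerivWithinAt hcone
  simp only [ContinuousLinearMap.toSpanSingleton_apply, smul_eq_mul, neg_one_mul, neg_sub,
    sub_nonpos] at hnonpos
  linarith [gradEnergyDeriv_time_nonpos b J τ hu hu₀ hflow hspace]

end Spacetime

section Flow
open scoped RealInnerProductSpace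

variable {m : ℕ}

/-- The inclusion of space into space-time, parallel to the time slices. -/
abbrev spaceInl (m : ℕ) : EuclideanSpace ℝ (Fin m) →L[ℝ] EuclideanSpace ℝ (Fin m) × ℝ :=
  .inl ℝ _ ℝ

theorem spatialGrad_eq_spatialPart {u : EuclideanSpace ℝ (Fin m) × ℝ → ℝ}
    {x : EuclideanSpace ℝ (Fin m)} {t : ℝ} {L : EuclideanSpace ℝ (Fin m) × ℝ →L[ℝ] ℝ}
    (h : HasFDerivAt (fun y => u (y, t)) (L ∘L spaceInl m) x) :
    spatialGrad u x t = spatialPart (spaceInl m) L := by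
  refine ext_inner_right ℝ fun ξ => ?_
  rw [inner_spatialPart, spatialGrad, gradient, InnerProductSpace.toDual_symm_apply, h.fderiv]
  rfl

theorem spatialGrad_eq_spatialPart_fderiv {u : EuclideanSpace ℝ (Fin m) × ℝ → ℝ}
    {q : EuclideanSpace ℝ (Fin m) × ℝ} (hu : DifferentiableAt ℝ u q) :
    spatialGrad u q.1 q.2 = spatialPart (spaceInl m) (fderiv ℝ u q) :=
  spatialGrad_eq_spatialPart (hu.hasFDerivAt.comp q.1 (hasFDerivAt_prodMk_left q.1 q.2))

theorem sq_gradFn_mul_sq (u : EuclideanSpace ℝ (Fin m) × ℝ → ℝ)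
    (q : EuclideanSpace ℝ (Fin m) × ℝ) :
    (gradFn u q.1 q.2 * u q ^ 2) ^ 2 = (1 + ‖spatialGrad u q.1 q.2‖ ^ 2) * u q ^ 4 := by
  rw [mul_pow, gradFn, Real.sq_sqrt (by positivity), ← pow_mul]

theorem sqrt_mul_vecDiv_inv_sqrt_smul {X : EuclideanSpace ℝ (Fin m) → EuclideanSpace ℝ (Fin m)}
    {B : EuclideanSpace ℝ (Fin m) →L[ℝ] EuclideanSpace ℝ (Fin m)} {x : EuclideanSpace ℝ (Fin m)}
    (hX : HasFDerivAt X B x) :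
    √(1 + ‖X x‖ ^ 2) * vecDiv (fun y => (√(1 + ‖X y‖ ^ 2))⁻¹ • X y) x =
      graphTrace (EuclideanSpace.basisFun (Fin m) ℝ) (X x) (innerSL ℝ ∘L B) := by
  have hs : 0 < 1 + ‖X x‖ ^ 2 := by positivity
  have hv : 0 < √(1 + ‖X x‖ ^ 2) := Real.sqrt_pos.2 hs
  have hsq : √(1 + ‖X x‖ ^ 2) ^ 2 = 1 + ‖X x‖ ^ 2 := Real.sq_sqrt hs.le
  have hinv : HasFDerivAt (fun y => (√(1 + ‖X y‖ ^ 2))⁻¹) _ x :=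
    (hasDerivAt_inv hv.ne').comp_hasFDerivAt x ((hX.norm_sq.const_add 1).sqrt hs.ne')
  have hcontract : ∑ i, X x i * ⟪X x, B (EuclideanSpace.single i 1)⟫ = ⟪X x, B (X x)⟫ := by
    simpa [EuclideanSpace.inner_single_left] using sum_inner_basis_smul_apply
      (EuclideanSpace.basisFun (Fin m) ℝ) (innerSL ℝ (X x) ∘L B) (X x)
  have htrace : graphTrace (EuclideanSpace.basisFun (Fin m) ℝ) (X x) (innerSL ℝ ∘L B) =
      ∑ i, (⟪B (EuclideanSpace.single i 1), EuclideanSpace.single i 1⟫ -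
        (1 + ‖X x‖ ^ 2)⁻¹ * (X x i * ⟪X x, B (EuclideanSpace.single i 1)⟫)) := by
    rw [Finset.sum_sub_distrib, ← Finset.mul_sum, hcontract, real_inner_comm]
    simp only [graphTrace_apply, EuclideanSpace.basisFun_apply]
    rfl
  rw [vecDiv, (hinv.fun_smul hX).fderiv, Finset.mul_sum, htrace]
  refine Finset.sum_congr rfl fun i _ => ?_
  simp only [hsq, one_div, mul_inv_rev, neg_smul, add_apply, smul_apply, neg_apply,
    ContinuousLinearMap.smulRight_apply, ContinuousLinearMap.comp_apply, coe_innerSL_apply,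
    nsmul_eq_mul, Nat.cast_ofNat, smul_eq_mul, PiLp.add_apply, PiLp.smul_apply, PiLp.neg_apply,
    EuclideanSpace.inner_single_right, Real.ringHom_apply, one_mul]
  field_simp
  ring

theorem mcfEqAt.graphMCFEqAt {u : EuclideanSpace ℝ (Fin m) × ℝ → ℝ}
    {q : EuclideanSpace ℝ (Fin m) × ℝ} (hu : ContDiffAt ℝ 2 u q) (h : mcfEqAt u q.1 q.2) :
    graphMCFEqAt (EuclideanSpace.basisFun (Fin m) ℝ) (spaceInl m) (0, 1) u q := by
  obtain ⟨x, t⟩ := q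
  have hu₁ := (hu.fderiv_right (m := 1) (by norm_num)).differentiableAt (by norm_num)
  have htime : deriv (fun s => u (x, s)) t = fderiv ℝ u (x, t) (0, 1) :=
    ((hu.differentiableAt (by norm_num)).hasFDerivAt.comp_hasDerivAt t
      ((hasDerivAt_const t x).prodMk (hasDerivAt_id t))).deriv
  have hnear : ∀ᶠ y in 𝓝 x,
      spatialGrad u y t = spatialPart (spaceInl m) (fderiv ℝ u (y, t)) := by
    have hslice : Tendsto (fun y => (y, t)) (𝓝 x) (𝓝 (x, t)) :=
      (Continuous.prodMk_left t).tendsto x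
    filter_upwards [hslice.eventually (hu.eventually (by simp))] with y hy
    exact spatialGrad_eq_spatialPart_fderiv (hy.differentiableAt (by norm_num))
  have hgrad : HasFDerivAt (fun y => spatialGrad u y t)
      (spatialHess (spaceInl m) u (x, t)) x :=
    ((spatialPart (spaceInl m)).hasFDerivAt.comp x
      (hu₁.hasFDerivAt.comp x (hasFDerivAt_prodMk_left x t))).congr_of_eventuallyEq hnear
  rw [_root_.graphMCFEqAt, ← htime, ← innerSL_comp_spatialHess, ← hnear.self_of_nhds]
  exact Eq.trans h (sqrt_mul_vecDiv_inv_sqrt_smul hgrad)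

theorem not_isLocalMaxOn_of_mcfEqAt {u : EuclideanSpace ℝ (Fin m) × ℝ → ℝ}
    {q : EuclideanSpace ℝ (Fin m) × ℝ} (hu : ContDiffAt ℝ 3 u q) (hu₀ : u q ≠ 0)
    (hflow : ∀ᶠ y in 𝓝 q, mcfEqAt u y.1 y.2) {ε : ℝ} (hε : 0 < ε) :
    ¬ IsLocalMaxOn (fun y => (gradFn u y.1 y.2 * u y ^ 2) ^ 2 - ε * y.2) {y | y.2 ≤ q.2} q := by
  have hsmooth := hu.eventually (by simp)
  have hflow' : ∀ᶠ y in 𝓝 q,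
      graphMCFEqAt (EuclideanSpace.basisFun (Fin m) ℝ) (spaceInl m) (0, 1) u y := by
    filter_upwards [hflow, hsmooth] with y hy hyu
    exact hy.graphMCFEqAt (hyu.of_le (by norm_num))
  have henergy : ∀ᶠ y in 𝓝 q,
      (gradFn u y.1 y.2 * u y ^ 2) ^ 2 = gradEnergy (spaceInl m) u y := by
    filter_upwards [hsmooth] with y hy
    rw [sq_gradFn_mul_sq, spatialGrad_eq_spatialPart_fderiv (hy.differentiableAt (by norm_num)),
      gradEnergy]
  refine fun hmax => not_isLocalMaxOn_gradEnergy_sub (EuclideanSpace.basisFun (Fin m) ℝ)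
    (ℓ := .snd ℝ _ ℝ) (by simp) (by simp) hu hu₀ hflow' hε (hmax.congr ?_ (mem_ofPred.2 le_rfl))
  filter_upwards [nhdsWithin_le_nhds henergy] with y hy
  rw [hy]
  rfl

end Flow

section MaximumPrinciple

variable {X : Type*} [PseudoMetricSpace X] [ProperSpace X] {S : Set X} {f : X → ℝ} {a c : ℝ}

theorem isCompact_superlevel_of_tendsto (hS : Bornology.IsBounded S) (hf : ContinuousOn f S)
    (hbd : ∀ p ∈ closure S, p ∉ S → Tendsto f (𝓝[S] p) (𝓝 a)) (hac : a < c) :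
    IsCompact {p ∈ S | c ≤ f p} := by
  refine isCompact_of_isClosed_isBounded (isClosed_of_closure_subset fun p hp => ?_)
    (hS.subset (sep_subset _ _))
  have := mem_closure_iff_nhdsWithin_neBot.1 hp
  have hmono : 𝓝[{p ∈ S | c ≤ f p}] p ≤ 𝓝[S] p := nhdsWithin_mono p (sep_subset _ _)
  have hge : ∀ᶠ y in 𝓝[{p ∈ S | c ≤ f p}] p, c ≤ f y := by
    filter_upwards [self_mem_nhdsWithin] with y hy using hy.2
  by_cases hpS : p ∈ S
  · exact ⟨hpS, ge_of_tendsto ((hf p hpS).mono_left hmono) hge⟩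
  · exact absurd (ge_of_tendsto
      ((hbd p (closure_mono (sep_subset _ _) hp) hpS).mono_left hmono) hge) hac.not_ge

theorem bddAbove_image_of_tendsto (hS : Bornology.IsBounded S) (hf : ContinuousOn f S)
    (hbd : ∀ p ∈ closure S, p ∉ S → Tendsto f (𝓝[S] p) (𝓝 a)) : BddAbove (f '' S) := by
  obtain ⟨C, hC⟩ := (isCompact_superlevel_of_tendsto hS hf hbd (lt_add_one a)).bddAbove_image
    (hf.mono (sep_subset _ _))
  refine ⟨max C (a + 1), forall_mem_image.2 fun p hp => ?_⟩
  rcases le_total (a + 1) (f p) with h | h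
  · exact le_max_of_le_left (hC (mem_image_of_mem f ⟨hp, h⟩))
  · exact le_max_of_le_right h

theorem le_of_forall_not_isLocalMaxOn_sub {τ : X → ℝ} (hτ : Continuous τ) (hτ₀ : ∀ p ∈ S, 0 ≤ τ p)
    (hS : Bornology.IsBounded S) (hf : ContinuousOn f S)
    (hbd : ∀ p ∈ closure S, p ∉ S → Tendsto f (𝓝[S] p) (𝓝 a)) (hac : a < c)
    (hmax : ∀ q ∈ S, c < f q → ∀ ε > 0, ¬ IsLocalMaxOn (fun y => f y - ε * τ y) S q) :
    ∀ p ∈ S, f p ≤ c := by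
  intro p hp
  by_contra! hcp
  obtain ⟨ε, hε, hεp⟩ : ∃ ε > 0, ε * τ p < f p - c := by
    have hp₀ := hτ₀ p hp
    refine ⟨(f p - c) / (τ p + 1), div_pos (sub_pos.2 hcp) (by positivity), ?_⟩
    rw [div_mul_eq_mul_div, div_lt_iff₀ (by positivity)]
    exact mul_lt_mul_of_pos_left (lt_add_one _) (sub_pos.2 hcp)
  obtain ⟨q, ⟨hq, -⟩, hqmax⟩ :=
    (isCompact_superlevel_of_tendsto hS hf hbd hac).exists_isMaxOn ⟨p, hp, hcp.le⟩
      ((hf.mono (sep_subset _ _)).sub (hτ.const_mul ε).continuousOn)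
  have hcq : c < f q := by
    have hpq : f p - ε * τ p ≤ f q - ε * τ q := hqmax ⟨hp, hcp.le⟩
    have : 0 ≤ ε * τ q := mul_nonneg hε.le (hτ₀ q hq)
    linarith
  refine hmax q hq hcq ε hε ?_
  filter_upwards [self_mem_nhdsWithin, (hf q hq).eventually_const_lt hcq] with y hy hcy
  exact hqmax ⟨hy, hcy.le⟩

end MaximumPrinciple

section Domain

variable {X : Type*} {Ω : Set (X × ℝ)}

theorem mem_nhds_of_relativelyOpen [TopologicalSpace X]
    (hΩ : ∃ U, IsOpen U ∧ Ω = U ∩ {p | 0 ≤ p.2}) {p : X × ℝ} (hp : p ∈ Ω) (hp₀ : 0 < p.2) :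
    Ω ∩ {p | 0 < p.2} ∈ 𝓝 p := by
  obtain ⟨U, hU, rfl⟩ := hΩ
  filter_upwards [hU.mem_nhds hp.1, continuous_snd.continuousAt.eventually_const_lt hp₀]
    with y hyU hy₀ using ⟨⟨hyU, hy₀.le⟩, hy₀⟩

theorem continuousOn_of_forall_slab [TopologicalSpace X] {Y : Type*} [TopologicalSpace Y]
    {f : X × ℝ → Y}
    (hf : ∀ T > (0 : ℝ), ContinuousOn f (Ω ∩ {p | p.2 ≤ T})) : ContinuousOn f Ω := fun p hp => by
  have hpT : p.2 < |p.2| + 1 := (le_abs_self _).trans_lt (lt_add_one _)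
  refine (hf (|p.2| + 1) (by positivity) p ⟨hp, hpT.le⟩).mono_of_mem_nhdsWithin ?_
  filter_upwards [self_mem_nhdsWithin,
    mem_nhdsWithin_of_mem_nhds (continuous_snd.continuousAt.eventually_lt_const hpT)]
    with y hy hyT using ⟨hy, hyT.le⟩

variable [NormedAddCommGroup X] [NormedSpace ℝ X]

theorem uniqueDiffOn_of_relativelyOpen (hΩ : ∃ U, IsOpen U ∧ Ω = U ∩ {p | 0 ≤ p.2}) :
    UniqueDiffOn ℝ Ω := by
  obtain ⟨U, hU, rfl⟩ := hΩ
  have hhalf : {p : X × ℝ | 0 ≤ p.2} = univ ×ˢ Ici 0 := by ext; simp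
  rw [inter_comm, hhalf]
  exact (uniqueDiffOn_univ.prod (uniqueDiffOn_Ici 0)).inter hU

theorem hasFDerivWithinAt_of_tendsto_fderiv_of_relativelyOpen {F : Type*} [NormedAddCommGroup F]
    [NormedSpace ℝ F] {u : X × ℝ → F} (hΩ : ∃ U, IsOpen U ∧ Ω = U ∩ {p | 0 ≤ p.2})
    (hu : ContinuousOn u Ω) (hu' : DifferentiableOn ℝ u (Ω ∩ {p | 0 < p.2})) {p : X × ℝ}
    (hp : p ∈ Ω) {L : X × ℝ →L[ℝ] F}
    (hL : Tendsto (fderiv ℝ u) (𝓝[Ω ∩ {p | 0 < p.2}] p) (𝓝 L)) :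
    HasFDerivWithinAt u L Ω p := by
  obtain ⟨U, hU, rfl⟩ := hΩ
  obtain ⟨ρ, hρ, hball⟩ := nhds_basis_closedBall.mem_iff.1 (hU.mem_nhds hp.1)
  set H : Set (X × ℝ) := univ ×ˢ Ioi 0
  have hH : IsOpen H := isOpen_univ.prod isOpen_Ioi
  have hH_closure : closure H = {p | 0 ≤ p.2} := by
    ext; simp [H, closure_prod_eq]
  have hsub : ball p ρ ∩ H ⊆ U ∩ {p | 0 ≤ p.2} ∩ {p | 0 < p.2} := fun y hy =>
    ⟨⟨hball (ball_subset_closedBall hy.1), (mem_Ioi.1 hy.2.2).le⟩, hy.2.2⟩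
  have hclosure : closure (ball p ρ ∩ H) ⊆ U ∩ {p | 0 ≤ p.2} := fun y hy =>
    ⟨hball (closure_ball_subset_closedBall (closure_mono inter_subset_left hy)),
      hH_closure ▸ closure_mono inter_subset_right hy⟩
  have hderiv : HasFDerivWithinAt u L (closure (ball p ρ ∩ H)) p :=
    hasFDerivWithinAt_closure_of_tendsto_fderiv (hu'.mono hsub)
      ((convex_ball p ρ).inter (convex_univ.prod (convex_Ioi 0))) (isOpen_ball.inter hH)
      (fun y hy => (hu y (hclosure hy)).mono (subset_closure.trans hclosure))
      (hL.mono_left (nhdsWithin_mono p hsub))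
  refine hderiv.mono_of_mem_nhdsWithin ?_
  filter_upwards [self_mem_nhdsWithin, mem_nhdsWithin_of_mem_nhds (ball_mem_nhds p hρ)]
    with y hy hyρ
  exact isOpen_ball.inter_closure ⟨hyρ, hH_closure ▸ hy.2⟩

theorem fderivWithin_eq_curryFin1_iteratedFDerivWithin {E F : Type*} [NormedAddCommGroup E]
    [NormedSpace ℝ E] [NormedAddCommGroup F] [NormedSpace ℝ F] {f : E → F} {s : Set E} {x : E}
    (hs : UniqueDiffWithinAt ℝ s x) :
    fderivWithin ℝ f s x =
      continuousMultilinearCurryFin1 ℝ E F (iteratedFDerivWithin ℝ 1 f s x) := by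
  ext v
  rw [continuousMultilinearCurryFin1_apply, iteratedFDerivWithin_one_apply hs]
  rfl

end Domain

section APrioriEstimate

variable {m : ℕ} {Ω : Set (EuclideanSpace ℝ (Fin m) × ℝ)} {u : EuclideanSpace ℝ (Fin m) × ℝ → ℝ}

theorem spatialGrad_eq_spatialPart_of_hasFDerivWithinAt
    (hΩ : ∃ U, IsOpen U ∧ Ω = U ∩ {p | 0 ≤ p.2}) {p : EuclideanSpace ℝ (Fin m) × ℝ} (hp : p ∈ Ω)
    {L : EuclideanSpace ℝ (Fin m) × ℝ →L[ℝ] ℝ} (h : HasFDerivWithinAt u L Ω p) :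
    spatialGrad u p.1 p.2 = spatialPart (spaceInl m) L := by
  obtain ⟨U, hU, rfl⟩ := hΩ
  have hslice : Tendsto (fun y => (y, p.2)) (𝓝 p.1) (𝓝 p) :=
    (Continuous.prodMk_left p.2).tendsto p.1
  refine spatialGrad_eq_spatialPart
    (h.comp_hasFDerivAt p.1 (hasFDerivAt_prodMk_left p.1 p.2) ?_)
  filter_upwards [hslice.eventually (hU.mem_nhds hp.1)] with y hy using ⟨hy, hp.2⟩

theorem spatialGrad_eq_spatialPart_fderivWithin
    (hΩ : ∃ U, IsOpen U ∧ Ω = U ∩ {p | 0 ≤ p.2}) (hu : ContinuousOn u Ω)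
    (hu' : DifferentiableOn ℝ u (Ω ∩ {p | 0 < p.2})) (hdu : ContinuousOn (fderivWithin ℝ u Ω) Ω)
    {p : EuclideanSpace ℝ (Fin m) × ℝ} (hp : p ∈ Ω) :
    spatialGrad u p.1 p.2 = spatialPart (spaceInl m) (fderivWithin ℝ u Ω p) := by
  refine spatialGrad_eq_spatialPart_of_hasFDerivWithinAt hΩ hp
    (hasFDerivWithinAt_of_tendsto_fderiv_of_relativelyOpen hΩ hu hu' hp ?_)
  refine ((hdu p hp).mono inter_subset_left).tendsto.congr' ?_
  filter_upwards [self_mem_nhdsWithin] with y hy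
  exact fderivWithin_of_mem_nhds
    (mem_of_superset (mem_nhds_of_relativelyOpen hΩ hy.1 hy.2) inter_subset_left)

theorem exists_spatialGrad_extension (hΩ : ∃ U, IsOpen U ∧ Ω = U ∩ {p | 0 ≤ p.2})
    (hu : ContinuousOn u Ω) (hu' : DifferentiableOn ℝ u (Ω ∩ {p | 0 < p.2}))
    (hext : ∀ T > (0 : ℝ),
      ∃ g : EuclideanSpace ℝ (Fin m) × ℝ → (EuclideanSpace ℝ (Fin m) × ℝ) [×1]→L[ℝ] ℝ,
        ContinuousOn g (closure (Ω ∩ {p | p.2 ≤ T})) ∧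
        ∀ p ∈ Ω ∩ {p | p.2 ≤ T}, g p = iteratedFDerivWithin ℝ 1 u Ω p)
    {T : ℝ} (hT : 0 < T) :
    ∃ g : EuclideanSpace ℝ (Fin m) × ℝ → EuclideanSpace ℝ (Fin m),
      ContinuousOn g (closure (Ω ∩ {p | p.2 ≤ T})) ∧
      ∀ p ∈ Ω ∩ {p | p.2 ≤ T}, g p = spatialGrad u p.1 p.2 := by
  let curry := continuousMultilinearCurryFin1 ℝ (EuclideanSpace ℝ (Fin m) × ℝ) ℝ
  have hcurry : ∀ p ∈ Ω, fderivWithin ℝ u Ω p = curry (iteratedFDerivWithin ℝ 1 u Ω p) :=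
    fun p hp => fderivWithin_eq_curryFin1_iteratedFDerivWithin
      (uniqueDiffOn_of_relativelyOpen hΩ p hp)
  have hdu : ContinuousOn (fderivWithin ℝ u Ω) Ω := continuousOn_of_forall_slab fun T hT => by
    obtain ⟨g, hg, hgu⟩ := hext T hT
    refine (curry.continuous.comp_continuousOn (hg.mono subset_closure)).congr fun p hp => ?_
    rw [hcurry p hp.1, Function.comp_apply, hgu p hp]
  obtain ⟨g, hg, hgu⟩ := hext T hT
  refine ⟨fun p => spatialPart (spaceInl m) (curry (g p)),
    (spatialPart (spaceInl m)).continuous.comp_continuousOn (curry.continuous.comp_continuousOn hg),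
    fun p hp => ?_⟩
  simp only [hgu p hp, ← hcurry p hp.1, spatialGrad_eq_spatialPart_fderivWithin hΩ hu hu' hdu hp.1]

/-- The part of the a priori estimate assumption that the gradient bound rests on: a `C³` solution
of graphical mean curvature flow on `Ω ∩ {t > 0}` which vanishes at the relative boundary and
whose spatial gradient extends continuously to the closure of every slab `Ω ∩ {t ≤ T}`. -/
structure IsAPrioriMCF (Ω : Set (EuclideanSpace ℝ (Fin m) × ℝ))
    (u : EuclideanSpace ℝ (Fin m) × ℝ → ℝ) : Prop where
  relativelyOpen : ∃ U, IsOpen U ∧ Ω = U ∩ {p | 0 ≤ p.2}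
  continuousOn : ContinuousOn u Ω
  contDiffOn : ContDiffOn ℝ 3 u (Ω ∩ {p | 0 < p.2})
  mcfEq : ∀ p ∈ Ω, 0 < p.2 → mcfEqAt u p.1 p.2
  tendsto_zero : ∀ p : EuclideanSpace ℝ (Fin m) × ℝ,
    0 ≤ p.2 → p ∈ closure Ω → p ∉ Ω → Tendsto u (𝓝[Ω] p) (𝓝 0)
  exists_spatialGrad_extension : ∀ T > (0 : ℝ),
    ∃ g : EuclideanSpace ℝ (Fin m) × ℝ → EuclideanSpace ℝ (Fin m),
      ContinuousOn g (closure (Ω ∩ {p | p.2 ≤ T})) ∧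
      ∀ p ∈ Ω ∩ {p | p.2 ≤ T}, g p = spatialGrad u p.1 p.2
  isBounded_slab : ∀ T > (0 : ℝ), Bornology.IsBounded (Ω ∩ {p | p.2 ≤ T})

/-- The part of the domain up to time `T` on which `u` is negative. -/
def negativeSlab (Ω : Set (EuclideanSpace ℝ (Fin m) × ℝ)) (u : EuclideanSpace ℝ (Fin m) × ℝ → ℝ)
    (T : ℝ) : Set (EuclideanSpace ℝ (Fin m) × ℝ) :=
  {p | p ∈ Ω ∧ p.2 ≤ T ∧ u p < 0}

theorem negativeSlab_subset (T : ℝ) : negativeSlab Ω u T ⊆ Ω ∩ {p | p.2 ≤ T} :=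
  fun _ hp => ⟨hp.1, hp.2.1⟩

namespace IsAPrioriMCF

variable {T c : ℝ} {p : EuclideanSpace ℝ (Fin m) × ℝ}

theorem time_nonneg (h : IsAPrioriMCF Ω u) (hp : p ∈ Ω) : 0 ≤ p.2 := by
  obtain ⟨U, -, rfl⟩ := h.relativelyOpen
  exact hp.2

theorem exists_gradFn_extension (h : IsAPrioriMCF Ω u) (hT : 0 < T) :
    ∃ v : EuclideanSpace ℝ (Fin m) × ℝ → ℝ, ContinuousOn v (closure (Ω ∩ {p | p.2 ≤ T})) ∧
      ∀ p ∈ Ω ∩ {p | p.2 ≤ T}, v p = gradFn u p.1 p.2 := by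
  obtain ⟨g, hg, hgu⟩ := h.exists_spatialGrad_extension T hT
  refine ⟨fun p => √(1 + ‖g p‖ ^ 2), ((hg.norm.pow 2).const_add 1).sqrt, fun p hp => ?_⟩
  simp only [hgu p hp, gradFn]

theorem continuousOn_gradFn_mul_sq (h : IsAPrioriMCF Ω u) (hT : 0 < T) :
    ContinuousOn (fun p => gradFn u p.1 p.2 * u p ^ 2) (negativeSlab Ω u T) := by
  obtain ⟨v, hv, hvu⟩ := h.exists_gradFn_extension hT
  exact (((hv.mono subset_closure).congr fun p hp => (hvu p hp).symm).mul
    ((h.continuousOn.mono inter_subset_left).pow 2)).mono (negativeSlab_subset T)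

theorem tendsto_zero_negativeSlab (h : IsAPrioriMCF Ω u) (hp : p ∈ closure (negativeSlab Ω u T))
    (hp' : p ∉ negativeSlab Ω u T) : Tendsto u (𝓝[negativeSlab Ω u T] p) (𝓝 0) := by
  have hsub : negativeSlab Ω u T ⊆ Ω := (negativeSlab_subset T).trans inter_subset_left
  have := mem_closure_iff_nhdsWithin_neBot.1 hp
  have hpT : p.2 ≤ T := closure_minimal (fun y hy => hy.2.1)
    (isClosed_le continuous_snd continuous_const) hp
  have hp₀ : 0 ≤ p.2 := closure_minimal (fun y hy => h.time_nonneg (hsub hy))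
    (isClosed_le continuous_const continuous_snd) hp
  by_cases hpΩ : p ∈ Ω
  · have hlim : Tendsto u (𝓝[negativeSlab Ω u T] p) (𝓝 (u p)) := (h.continuousOn p hpΩ).mono hsub
    have hle : u p ≤ 0 := le_of_tendsto hlim (by
      filter_upwards [self_mem_nhdsWithin] with y hy using hy.2.2.le)
    rwa [hle.antisymm (not_lt.1 fun hlt => hp' ⟨hpΩ, hpT, hlt⟩)] at hlim
  · exact (h.tendsto_zero p hp₀ (closure_mono hsub hp) hpΩ).mono_left (nhdsWithin_mono p hsub)

theorem tendsto_gradFn_mul_sq_zero (h : IsAPrioriMCF Ω u) (hT : 0 < T)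
    (hp : p ∈ closure (negativeSlab Ω u T)) (hp' : p ∉ negativeSlab Ω u T) :
    Tendsto (fun y => gradFn u y.1 y.2 * u y ^ 2) (𝓝[negativeSlab Ω u T] p) (𝓝 0) := by
  obtain ⟨v, hv, hvu⟩ := h.exists_gradFn_extension hT
  have hlim : Tendsto (fun y => v y * u y ^ 2) (𝓝[negativeSlab Ω u T] p) (𝓝 (v p * 0 ^ 2)) :=
    ((hv p (closure_mono (negativeSlab_subset T) hp)).mono
      ((negativeSlab_subset T).trans subset_closure)).tendsto.mul
        ((h.tendsto_zero_negativeSlab hp hp').pow 2)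
  rw [zero_pow two_ne_zero, mul_zero] at hlim
  refine hlim.congr' ?_
  filter_upwards [self_mem_nhdsWithin] with y hy
  rw [hvu y (negativeSlab_subset T hy)]

theorem isBounded_negativeSlab (h : IsAPrioriMCF Ω u) (hT : 0 < T) :
    Bornology.IsBounded (negativeSlab Ω u T) :=
  (h.isBounded_slab T hT).subset (negativeSlab_subset T)

theorem bddAbove_gradFn_mul_sq (h : IsAPrioriMCF Ω u) (hT : 0 < T) :
    BddAbove ((fun p => gradFn u p.1 p.2 * u p ^ 2) '' negativeSlab Ω u T) :=
  bddAbove_image_of_tendsto (h.isBounded_negativeSlab hT)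
    (h.continuousOn_gradFn_mul_sq hT)
    fun _ => h.tendsto_gradFn_mul_sq_zero hT

theorem not_isLocalMaxOn_negativeSlab (h : IsAPrioriMCF Ω u) (hp : p ∈ negativeSlab Ω u T)
    (hp₀ : 0 < p.2) {ε : ℝ} (hε : 0 < ε) :
    ¬ IsLocalMaxOn (fun y => (gradFn u y.1 y.2 * u y ^ 2) ^ 2 - ε * y.2)
      (negativeSlab Ω u T) p := fun hmax => by
  have hnhds := mem_nhds_of_relativelyOpen h.relativelyOpen hp.1 hp₀
  have hflow : ∀ᶠ y in 𝓝 p, mcfEqAt u y.1 y.2 := by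
    filter_upwards [hnhds] with y hy using h.mcfEq y hy.1 hy.2
  have hneg : ∀ᶠ y in 𝓝 p, u y < 0 :=
    (h.continuousOn.continuousAt (mem_of_superset hnhds inter_subset_left)).eventually_lt_const
      hp.2.2
  have hpast : negativeSlab Ω u T ∈ 𝓝[{y | y.2 ≤ p.2}] p := by
    filter_upwards [self_mem_nhdsWithin, nhdsWithin_le_nhds hnhds, nhdsWithin_le_nhds hneg]
      with y hyp hyΩ hy using ⟨hyΩ.1, hyp.trans hp.2.1, hy⟩
  exact not_isLocalMaxOn_of_mcfEqAt (h.contDiffOn.contDiffAt hnhds) hp.2.2.ne hflow hε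
    (hmax.filter_mono (le_inf nhdsWithin_le_nhds (le_principal_iff.2 hpast)))

theorem gradFn_mul_sq_le (h : IsAPrioriMCF Ω u) (hc : 0 < c)
    (hinit : ∀ y, (y, (0 : ℝ)) ∈ Ω → u (y, 0) < 0 → gradFn u y 0 * u (y, 0) ^ 2 ≤ c)
    (hp : p ∈ Ω) (hup : u p < 0) : gradFn u p.1 p.2 * u p ^ 2 ≤ c := by
  have hT : 0 < p.2 + 1 := by linarith [h.time_nonneg hp]
  refine le_of_pow_le_pow_left₀ two_ne_zero hc.le ?_
  refine le_of_forall_not_isLocalMaxOn_sub (f := fun p => (gradFn u p.1 p.2 * u p ^ 2) ^ 2) (a := 0)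
    continuous_snd (fun q hq => h.time_nonneg hq.1) (h.isBounded_negativeSlab hT)
    ((h.continuousOn_gradFn_mul_sq hT).pow 2)
    (fun q hq hq' => by simpa using (h.tendsto_gradFn_mul_sq_zero hT hq hq').pow 2)
    (by positivity) ?_ p ⟨hp, by linarith, hup⟩
  rintro ⟨y, t⟩ hq hcq ε hε
  rcases (h.time_nonneg hq.1).eq_or_lt with rfl | ht
  · exact absurd (pow_le_pow_left₀ (mul_nonneg (Real.sqrt_nonneg _) (sq_nonneg _))
      (hinit y hq.1 hq.2.2) 2) hcq.not_ge
  · exact h.not_isLocalMaxOn_negativeSlab hq ht hε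

end IsAPrioriMCF

theorem mcf_gradient_bound_general (h : IsAPrioriMCF Ω u) : ∀ p ∈ Ω, u p < 0 →
    gradFn u p.1 p.2 * u p ^ 2 ≤
      sSup {r : ℝ | ∃ y, (y, (0 : ℝ)) ∈ Ω ∧ u (y, 0) < 0 ∧
        r = gradFn u y 0 * (u (y, 0)) ^ 2} := by
  intro p hp hup
  set R := {r : ℝ | ∃ y, (y, (0 : ℝ)) ∈ Ω ∧ u (y, 0) < 0 ∧ r = gradFn u y 0 * (u (y, 0)) ^ 2}
  have hR : BddAbove R := (h.bddAbove_gradFn_mul_sq one_pos).mono <| by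
    rintro _ ⟨y, hy, huy, rfl⟩
    exact ⟨(y, 0), ⟨hy, zero_le_one, huy⟩, rfl⟩
  have hR₀ : 0 ≤ sSup R := Real.sSup_nonneg <| by
    rintro _ ⟨y, -, -, rfl⟩
    exact mul_nonneg (Real.sqrt_nonneg _) (sq_nonneg _)
  refine le_of_forall_gt_imp_ge_of_dense fun c hc => ?_
  exact h.gradFn_mul_sq_le (hR₀.trans_lt hc)
    (fun y hy huy => (le_csSup hR ⟨y, hy, huy, rfl⟩).trans hc.le) hp hup

end APrioriEstimate

/-- **C¹-estimate, corollary.**  Under the a priori estimate assumption, at points where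
`u ≤ -1` one has `v ≤ sup_{t=0, {u<0}} v u²`, where `v = √(1+|Du|²)`. -/
theorem mcf_gradient_bound (n : ℕ) (hn : 1 ≤ n)
    (Ω : Set (EuclideanSpace ℝ (Fin (n + 1)) × ℝ))
    (u : EuclideanSpace ℝ (Fin (n + 1)) × ℝ → ℝ)
    -- Ω is relatively open in ℝ^{n+1} × [0,∞)
    (hΩ : ∃ U, IsOpen U ∧ Ω = U ∩ {p | 0 ≤ p.2})
    -- u is a smooth solution of graphical mean curvature flow on Ω ∩ (ℝ^{n+1} × (0,∞))
    (hu_cont : ContinuousOn u Ω)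
    (hu_smooth : ContDiffOn ℝ (⊤ : ℕ∞) u (Ω ∩ {p | 0 < p.2}))
    (hu_eq : ∀ p ∈ Ω, 0 < p.2 → mcfEqAt u p.1 p.2)
    -- u(x,t) → 0 as (x,t) approaches the relative boundary of Ω
    (hu_zero : ∀ p : EuclideanSpace ℝ (Fin (n + 1)) × ℝ,
      0 ≤ p.2 → p ∈ closure Ω → p ∉ Ω → Tendsto u (𝓝[Ω] p) (𝓝 0))
    -- all derivatives of u are uniformly bounded on Ω ∩ (ℝ^{n+1} × [0,T]) ...
    (hu_deriv_bd : ∀ T > (0 : ℝ), ∀ k : ℕ, ∃ C : ℝ,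
      ∀ p ∈ Ω ∩ {p : EuclideanSpace ℝ (Fin (n + 1)) × ℝ | p.2 ≤ T},
        ‖iteratedFDerivWithin ℝ k u Ω p‖ ≤ C)
    -- ... and extend continuously across the boundary of these sets
    (hu_deriv_ext : ∀ T > (0 : ℝ), ∀ k : ℕ,
      ∃ g : EuclideanSpace ℝ (Fin (n + 1)) × ℝ →
        (EuclideanSpace ℝ (Fin (n + 1)) × ℝ) [×k]→L[ℝ] ℝ,
        ContinuousOn g (closure (Ω ∩ {p | p.2 ≤ T})) ∧
        ∀ p ∈ Ω ∩ {p : EuclideanSpace ℝ (Fin (n + 1)) × ℝ | p.2 ≤ T},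
          g p = iteratedFDerivWithin ℝ k u Ω p)
    -- the sets Ω ∩ (ℝ^{n+1} × [0,T]) are bounded
    (hΩ_bdd : ∀ T > (0 : ℝ),
      Bornology.IsBounded (Ω ∩ {p : EuclideanSpace ℝ (Fin (n + 1)) × ℝ | p.2 ≤ T})) :
    ∀ p ∈ Ω, u p ≤ -1 →
      gradFn u p.1 p.2 ≤
        sSup {r : ℝ | ∃ y, (y, (0 : ℝ)) ∈ Ω ∧ u (y, 0) < 0 ∧
          r = gradFn u y 0 * (u (y, 0)) ^ 2} := by
  have hu_smooth₃ := hu_smooth.of_le (m := 3) (WithTop.coe_le_coe.2 le_top)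
  have h : IsAPrioriMCF Ω u := ⟨hΩ, hu_cont, hu_smooth₃, hu_eq, hu_zero,
    fun T hT => exists_spatialGrad_extension hΩ hu_cont (hu_smooth₃.differentiableOn (by norm_num))
      (fun T hT => hu_deriv_ext T hT 1) hT, hΩ_bdd⟩
  intro p hp hup
  have hsq : 1 ≤ u p ^ 2 := by nlinarith
  exact (le_mul_of_one_le_right (Real.sqrt_nonneg _) hsq).trans
    (mcf_gradient_bound_general h p hp (by linarith))
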